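/- For any s > 0 and any nonzero real numbers x and ξ₂, the improper Riemann integral ∫_{−∞}^∞ e^{−2πitξ₂} (x⁴ + t²)^{−s/4} dt converges (as the limit of ∫_{−N}^N as N → ∞) and equals (2π^{s/4} / Γ(s/4)) |x|^{1−s/2} |ξ₂|^{(s−2)/4} K_{(s−2)/4}(2π x² |ξ₂|). -/

import Mathlib

/-!
The power `(x⁴ + t²)^{-a}`, `a = s/4`, is the superposition
`Γ(a)⁻¹ ∫₀^∞ u^{a-1} e^{-x⁴u} e^{-ut²} du` of Gaussians, and Fubini moves the Fourier integral over
`[-N, N]` onto `e^{-ut²}`. As the total variation of `e^{-ut²}` does not depend on `u`, one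
integration by parts bounds these truncated Fourier integrals uniformly in `u` and `N`, so
dominated convergence applies for every `a` with positive real part, although the original
integral may converge only conditionally. The Fourier transform of the Gaussian turns the limit into
a multiple of the extended Gamma function `Γ_w(ν) = ∫₀^∞ u^{ν-1} e^{-u-w/u} du` with `ν = a - 1/2`.

To see that `K_ν(z) = ½ (z/2)^{-ν} Γ_w(ν)` with `w = z²/4`, write `I_ν(z) = (z/2)^ν C_ν(w)` with
`C_ν` entire. The derivatives in `w` of `C` and `Γ_w` are shifts of the order, whence the Wronskian
of `C_{-ν}` and `C_ν`, and that of `C_ν` and `Γ_w(ν)`, can be evaluated by letting `w → 0`.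
Eliminating the shifted function between them gives
`sin(πν)/π · Γ_w(ν) = C_{-ν}(w) - w^ν C_ν(w)` for all complex `ν`. Dividing by the sine settles
non-integer orders, and integer orders follow because `Γ_w` is entire in `ν`.
-/

open Filter Set MeasureTheory
open scoped Real Classical

/-- The modified Bessel function of the first kind
`I_ν(z) = Σ_{n=0}^∞ (z/2)^{ν+2n} / (n! Γ(n+ν+1))`, with the principal branch of powers.
(When `ν` is a negative integer the terms with `n + ν + 1 ≤ 0` vanish, since Mathlib's
`Complex.Gamma` vanishes at nonpositive integers, implementing the convention that the sum
starts at `n = -ν`.) -/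
noncomputable def besselI (ν z : ℂ) : ℂ :=
  ∑' n : ℕ, (z / 2) ^ (ν + 2 * (n : ℂ)) / ((n.factorial : ℂ) * Complex.Gamma ((n : ℂ) + ν + 1))

/-- The modified Bessel function of the second kind:
`K_ν = (π / (2 sin (νπ))) (I_{-ν} - I_ν)` for non-integer `ν`, and for integer `ν` the limit
of this expression as the order tends to `ν`. -/

noncomputable def besselK (ν z : ℂ) : ℂ :=
  if ∃ n : ℤ, ν = (n : ℂ) then
    limUnder (nhdsWithin ν {ν}ᶜ)
      (fun μ => ((Real.pi : ℂ) / (2 * Complex.sin (μ * (Real.pi : ℂ)))) *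
        (besselI (-μ) z - besselI μ z))
  else ((Real.pi : ℂ) / (2 * Complex.sin (ν * (Real.pi : ℂ)))) * (besselI (-ν) z - besselI ν z)

open scoped Topology

lemma hasDerivAt_tsum_mul_pow {c : ℕ → ℂ} (hc : ∀ w : ℂ, Summable fun n => c n * w ^ n) (w : ℂ) :
    HasDerivAt (fun v => ∑' n, c n * v ^ n) (∑' n : ℕ, ((n : ℂ) + 1) * c (n + 1) * w ^ n) w := by
  have hw : w ∈ Metric.ball (0 : ℂ) (‖w‖ + 1) := by simp
  have h_diff : ∀ n : ℕ, DifferentiableOn ℂ (fun v => c n * v ^ n) (Metric.ball 0 (‖w‖ + 1)) :=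
    fun n => by fun_prop
  have h_bound : ∀ (n : ℕ), ∀ v ∈ Metric.ball (0 : ℂ) (‖w‖ + 1),
      ‖c n * v ^ n‖ ≤ ‖c n * ((‖w‖ + 1 : ℝ) : ℂ) ^ n‖ := by
    intro n v hv
    have hv' : ‖v‖ ≤ ‖((‖w‖ + 1 : ℝ) : ℂ)‖ := by
      rw [Complex.norm_of_nonneg (by positivity)]
      exact (mem_ball_zero_iff.1 hv).le
    simp only [norm_mul, norm_pow]
    gcongr
  have h_sum := (hc ((‖w‖ + 1 : ℝ) : ℂ)).norm
  have h_deriv := Complex.hasSum_deriv_of_summable_norm h_sum h_diff Metric.isOpen_ball h_bound hw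
  have h_differentiable :=
    (Complex.differentiableOn_tsum_of_summable_norm h_sum h_diff Metric.isOpen_ball
      h_bound).differentiableAt (Metric.isOpen_ball.mem_nhds hw)
  refine h_differentiable.hasDerivAt.congr_deriv ?_
  rw [← h_deriv.tsum_eq, h_deriv.summable.tsum_eq_zero_add]
  simp only [pow_zero, deriv_const_mul_field', deriv_const', mul_zero, zero_add, deriv_pow_field,
    add_tsub_cancel_right]
  refine tsum_congr fun n => ?_
  push_cast
  ring

/-! ### The Bessel–Clifford function -/

/-- The Taylor coefficients `1 / (n! Γ(n + ν + 1))` of the Bessel–Clifford function. They vanish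
when `n + ν + 1` is a pole of `Γ`, where Mathlib sets `Γ` to `0`. -/
noncomputable def besselCliffordCoeff (ν : ℂ) (n : ℕ) : ℂ :=
  (n.factorial : ℂ)⁻¹ * (Complex.Gamma (n + ν + 1))⁻¹

/-- The Bessel–Clifford function `C_ν(w) = Σ wⁿ / (n! Γ(n + ν + 1))`, the entire part of `I_ν`:
`I_ν(z) = (z/2)^ν C_ν((z/2)²)`. -/
noncomputable def besselClifford (ν w : ℂ) : ℂ :=
  ∑' n : ℕ, besselCliffordCoeff ν n * w ^ n

lemma succ_mul_besselCliffordCoeff_succ (ν : ℂ) (n : ℕ) :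
    ((n : ℂ) + 1) * besselCliffordCoeff ν (n + 1) = besselCliffordCoeff (ν + 1) n := by
  have hn : (n : ℂ) + 1 ≠ 0 := Nat.cast_add_one_ne_zero n
  have hΓ : (n : ℂ) + (ν + 1) + 1 = (n + 1 : ℕ) + ν + 1 := by push_cast; ring
  rw [besselCliffordCoeff, besselCliffordCoeff, hΓ, Nat.factorial_succ]
  push_cast
  field_simp

lemma besselCliffordCoeff_eq_mul (ν : ℂ) (n : ℕ) :
    besselCliffordCoeff ν n = (n + ν + 1) * besselCliffordCoeff (ν + 1) n := by
  have hΓ : (n : ℂ) + (ν + 1) + 1 = n + ν + 1 + 1 := by ring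
  rw [besselCliffordCoeff, besselCliffordCoeff, hΓ,
    Complex.one_div_Gamma_eq_self_mul_one_div_Gamma_add_one]
  ring

lemma summable_besselClifford (ν w : ℂ) :
    Summable fun n : ℕ => besselCliffordCoeff ν n * w ^ n := by
  refine summable_of_ratio_norm_eventually_le (r := 1 / 2) (by norm_num) ?_
  filter_upwards [tendsto_natCast_atTop_atTop.eventually_ge_atTop (2 * ‖w‖ + ‖ν‖)] with n hn
  have h_succ : 1 ≤ ‖(n : ℂ) + 1‖ := by
    rw [← Nat.cast_add_one, Complex.norm_natCast]
    simp
  have h_shift : 2 * ‖w‖ ≤ ‖(n : ℂ) + ν + 1‖ := by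
    have h := norm_sub_le ((n : ℂ) + ν + 1) ν
    rw [show (n : ℂ) + ν + 1 - ν = (n + 1 : ℕ) by push_cast; ring, Complex.norm_natCast] at h
    push_cast at h
    linarith
  have h_ratio : 2 * ‖w‖ ≤ ‖(n : ℂ) + ν + 1‖ * ‖(n : ℂ) + 1‖ := by
    nlinarith [norm_nonneg w]
  rw [besselCliffordCoeff_eq_mul ν n, ← succ_mul_besselCliffordCoeff_succ ν n, pow_succ]
  simp only [norm_mul]
  nlinarith [mul_le_mul_of_nonneg_right h_ratio
    (by positivity : 0 ≤ ‖besselCliffordCoeff ν (n + 1)‖ * ‖w ^ n‖)]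

lemma besselClifford_zero (ν : ℂ) : besselClifford ν 0 = (Complex.Gamma (ν + 1))⁻¹ := by
  rw [besselClifford, tsum_eq_single 0 fun n hn => by simp [hn]]
  simp [besselCliffordCoeff]

lemma hasDerivAt_besselClifford (ν w : ℂ) :
    HasDerivAt (besselClifford ν) (besselClifford (ν + 1) w) w := by
  simpa only [succ_mul_besselCliffordCoeff_succ] using!
    hasDerivAt_tsum_mul_pow (summable_besselClifford ν) w

lemma besselClifford_eq_add (ν w : ℂ) :
    besselClifford ν w = (ν + 1) * besselClifford (ν + 1) w + w * besselClifford (ν + 2) w := by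
  have h_shift : ∀ n : ℕ, ((n + 1 : ℕ) : ℂ) * (besselCliffordCoeff (ν + 1) (n + 1) * w ^ (n + 1)) =
      w * (besselCliffordCoeff (ν + 2) n * w ^ n) := by
    intro n
    rw [show ν + 2 = ν + 1 + 1 by ring, ← succ_mul_besselCliffordCoeff_succ (ν + 1)]
    push_cast
    ring
  have h_sum : Summable fun n : ℕ => (n : ℂ) * (besselCliffordCoeff (ν + 1) n * w ^ n) := by
    rw [← summable_nat_add_iff 1]
    simpa only [h_shift] using (summable_besselClifford (ν + 2) w).mul_left w
  have h_tsum : w * besselClifford (ν + 2) w =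
      ∑' n : ℕ, (n : ℂ) * (besselCliffordCoeff (ν + 1) n * w ^ n) := by
    rw [h_sum.tsum_eq_zero_add]
    simp only [h_shift, tsum_mul_left, Nat.cast_zero, zero_mul, zero_add, besselClifford]
  rw [h_tsum, besselClifford, besselClifford, ← tsum_mul_left,
    ← ((summable_besselClifford (ν + 1) w).mul_left _).tsum_add h_sum]
  refine tsum_congr fun n => ?_
  rw [besselCliffordCoeff_eq_mul]
  ring

lemma besselClifford_mul_besselClifford_neg_sub (ν w : ℂ) :
    w * besselClifford (ν + 1) w * besselClifford (-ν) w -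
      besselClifford ν w * besselClifford (-ν - 1) w = Complex.sin (π * ν) / π := by
  set W : ℂ → ℂ := fun w => w * besselClifford (ν + 1) w * besselClifford (-ν) w -
    besselClifford ν w * besselClifford (-ν - 1) w with hW
  have h_deriv : ∀ w, HasDerivAt W 0 w := by
    intro w
    refine ((((hasDerivAt_id w).mul (hasDerivAt_besselClifford (ν + 1) w)).mul
      (hasDerivAt_besselClifford (-ν) w)).sub ((hasDerivAt_besselClifford ν w).mul
        (hasDerivAt_besselClifford (-ν - 1) w))).congr_deriv ?_
    have h₁ := besselClifford_eq_add ν w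
    have h₂ := besselClifford_eq_add (-ν - 1) w
    rw [show -ν - 1 + 1 = -ν by ring, show -ν - 1 + 2 = -ν + 1 by ring] at h₂
    rw [show ν + 1 + 1 = ν + 2 by ring, show -ν - 1 + 1 = -ν by ring]
    simp only [Pi.mul_apply, id]
    linear_combination -besselClifford (-ν) w * h₁ - besselClifford (ν + 1) w * h₂
  have h_zero : W 0 = Complex.sin (π * ν) / π := by
    have h_reflection := Complex.Gamma_mul_Gamma_one_sub (-ν)
    rw [sub_neg_eq_add, mul_neg, Complex.sin_neg, add_comm 1 ν] at h_reflection
    simp only [hW, besselClifford_zero, sub_add_cancel]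
    rw [mul_comm _ (Complex.Gamma (-ν))⁻¹, ← mul_inv, h_reflection, inv_div]
    ring
  rw [← h_zero]
  exact is_const_of_deriv_eq_zero (fun v => (h_deriv v).differentiableAt)
    (fun v => (h_deriv v).deriv) w 0

lemma integral_Ioi_zero_eq_zero_of_hasDerivAt {E : Type*} [NormedAddCommGroup E] [NormedSpace ℝ E]
    {f f' : ℝ → E} (h_deriv : ∀ u ∈ Ioi (0 : ℝ), HasDerivAt f (f' u) u)
    (hf : IntegrableOn (fun u => u⁻¹ • f u) (Ioi 0)) (hf' : IntegrableOn f' (Ioi 0)) :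
    ∫ u in Ioi (0 : ℝ), f' u = 0 := by
  have h_exp : ∀ x ∈ univ, HasDerivWithinAt Real.exp (Real.exp x) univ x :=
    fun x _ => (Real.hasDerivAt_exp x).hasDerivWithinAt
  rw [← Real.range_exp, ← image_univ] at hf hf' ⊢
  rw [integrableOn_image_iff_integrableOn_abs_deriv_smul MeasurableSet.univ h_exp
    Real.exp_injective.injOn, integrableOn_univ] at hf hf'
  rw [integral_image_eq_integral_abs_deriv_smul MeasurableSet.univ h_exp
    Real.exp_injective.injOn, setIntegral_univ]
  simp only [Real.abs_exp] at hf hf' ⊢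
  simp only [smul_smul, mul_inv_cancel₀ (Real.exp_ne_zero _), one_smul] at hf
  exact integral_eq_zero_of_hasDerivAt_of_integrable
    (fun x => (h_deriv _ (Real.exp_pos x)).scomp x (Real.hasDerivAt_exp x)) hf' hf

lemma mellin_of_hasDerivAt {E : Type*} [NormedAddCommGroup E] [NormedSpace ℂ E] {f f' : ℝ → E}
    {s : ℂ} (h_deriv : ∀ u ∈ Ioi (0 : ℝ), HasDerivAt f (f' u) u)
    (hf : MellinConvergent f (s - 1)) (hf' : MellinConvergent f' s) :
    mellin f' s = -((s - 1) • mellin f (s - 1)) := by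
  have h_prod : ∀ u ∈ Ioi (0 : ℝ), HasDerivAt (fun u : ℝ => (u : ℂ) ^ (s - 1) • f u)
      ((u : ℂ) ^ (s - 1) • f' u + (s - 1) • ((u : ℂ) ^ (s - 1 - 1) • f u)) u := by
    intro u hu
    have h_cpow : HasDerivAt (fun u : ℝ => (u : ℂ) ^ (s - 1))
        ((s - 1) * (u : ℂ) ^ (s - 1 - 1)) u := by
      simpa using
        ((hasDerivAt_id (u : ℂ)).cpow_const (Complex.ofReal_mem_slitPlane.2 hu)).comp_ofReal
    simpa only [smul_smul] using! h_cpow.smul (h_deriv u hu)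
  have hf_smul : IntegrableOn (fun u : ℝ => (s - 1) • ((u : ℂ) ^ (s - 1 - 1) • f u)) (Ioi 0) :=
    Integrable.smul (s - 1) hf
  have h_zero := integral_Ioi_zero_eq_zero_of_hasDerivAt h_prod ?_ (hf'.add hf_smul)
  · rw [integral_add hf' hf_smul, integral_smul] at h_zero
    exact eq_neg_of_add_eq_zero_left h_zero
  · refine hf.congr_fun (fun u hu => ?_) measurableSet_Ioi
    have hu' : (u : ℂ) ≠ 0 := Complex.ofReal_ne_zero.2 (ne_of_gt hu)
    simp only [Complex.cpow_sub _ _ hu', Complex.cpow_one]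
    rw [← Complex.coe_smul, smul_smul, Complex.ofReal_inv, div_eq_inv_mul]

/-! ### The extended Gamma function -/

/-- The function `u ↦ e^{-u-w/u}`, whose Mellin transform is the extended Gamma function. -/
noncomputable def extendedGammaKernel (w u : ℝ) : ℂ := (Real.exp (-u - w / u) : ℝ)

/-- The extended Gamma function `Γ_w(ν) = ∫₀^∞ u^{ν-1} e^{-u-w/u} du` of Chaudhry and Zubair, in
terms of which `K_ν(z) = ½ (z/2)^{-ν} Γ_w(ν)` with `w = (z/2)²`. -/
noncomputable def extendedGamma (ν : ℂ) (w : ℝ) : ℂ := mellin (extendedGammaKernel w) ν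

lemma norm_extendedGammaKernel (w u : ℝ) :
    ‖extendedGammaKernel w u‖ = Real.exp (-u - w / u) :=
  Complex.norm_of_nonneg (Real.exp_pos _).le

lemma continuousOn_extendedGammaKernel (w : ℝ) :
    ContinuousOn (extendedGammaKernel w) (Ioi 0) :=
  Complex.continuous_ofReal.comp_continuousOn <| Real.continuous_exp.comp_continuousOn <|
    continuousOn_id.neg.sub <| continuousOn_const.div continuousOn_id fun _ hu => (ne_of_gt hu)

lemma aestronglyMeasurable_cpow_smul_extendedGammaKernel (w : ℝ) (μ : ℂ) :
    AEStronglyMeasurable (fun u : ℝ => (u : ℂ) ^ μ • extendedGammaKernel w u)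
      (volume.restrict (Ioi 0)) := by
  have h_cpow : ContinuousOn (fun u : ℝ => (u : ℂ) ^ μ) (Ioi 0) := fun u hu =>
    (Complex.continuousAt_ofReal_cpow_const u μ (Or.inr (ne_of_gt hu))).continuousWithinAt
  exact (h_cpow.smul (continuousOn_extendedGammaKernel w)).aestronglyMeasurable measurableSet_Ioi

lemma extendedGammaKernel_isBigO_atTop {w : ℝ} (hw : 0 ≤ w) :
    extendedGammaKernel w =O[atTop] fun u : ℝ => Real.exp (-1 * u) := by
  refine Asymptotics.IsBigO.of_bound 1 ?_
  filter_upwards [eventually_gt_atTop 0] with u hu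
  rw [norm_extendedGammaKernel, Real.norm_of_nonneg (Real.exp_pos _).le, one_mul]
  have h_nonneg : 0 ≤ w / u := by positivity
  exact Real.exp_le_exp.2 (by linarith)

lemma extendedGammaKernel_isBigO_nhdsGT_zero {w : ℝ} (hw : 0 < w) (b : ℝ) :
    extendedGammaKernel w =O[𝓝[>] 0] fun u : ℝ => u ^ b := by
  have h_exp : (fun u : ℝ => Real.exp (-w * u⁻¹)) =O[𝓝[>] 0] fun u : ℝ => u⁻¹ ^ (-b) :=
    (isLittleO_exp_neg_mul_rpow_atTop hw (-b)).isBigO.comp_tendsto tendsto_inv_nhdsGT_zero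
  refine (Asymptotics.IsBigO.of_bound 1 ?_).trans (h_exp.congr' .rfl ?_)
  · filter_upwards [self_mem_nhdsWithin] with u (hu : 0 < u)
    rw [norm_extendedGammaKernel, Real.norm_of_nonneg (Real.exp_pos _).le, one_mul]
    exact Real.exp_le_exp.2 (by rw [div_eq_mul_inv]; linarith)
  · filter_upwards [self_mem_nhdsWithin] with u (hu : 0 < u)
    rw [Real.inv_rpow hu.le, Real.rpow_neg hu.le, inv_inv]

lemma mellinConvergent_extendedGammaKernel {w : ℝ} (hw : 0 < w) (ν : ℂ) :
    MellinConvergent (extendedGammaKernel w) ν :=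
  mellinConvergent_of_isBigO_rpow_exp one_pos
    ((continuousOn_extendedGammaKernel w).locallyIntegrableOn measurableSet_Ioi)
    (extendedGammaKernel_isBigO_atTop hw.le)
    (extendedGammaKernel_isBigO_nhdsGT_zero hw (-(ν.re - 1))) (by linarith)

lemma differentiable_extendedGamma {w : ℝ} (hw : 0 < w) :
    Differentiable ℂ fun ν => extendedGamma ν w := fun ν =>
  mellin_differentiableAt_of_isBigO_rpow_exp one_pos
    ((continuousOn_extendedGammaKernel w).locallyIntegrableOn measurableSet_Ioi)
    (extendedGammaKernel_isBigO_atTop hw.le)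
    (extendedGammaKernel_isBigO_nhdsGT_zero hw (-(ν.re - 1))) (by linarith)

-- Substitute `u ↦ w / u`.
lemma extendedGamma_eq_cpow_mul_extendedGamma_neg {w : ℝ} (hw : 0 < w) (ν : ℂ) :
    extendedGamma ν w = (w : ℂ) ^ ν * extendedGamma (-ν) w := by
  have h_inv : mellin (extendedGammaKernel w) ν =
      mellin (fun u => extendedGammaKernel w (w * u⁻¹)) ν := by
    refine setIntegral_congr_fun measurableSet_Ioi fun u (hu : 0 < u) => ?_
    have h_exponent : -u - w / u = -(w * u⁻¹) - w / (w * u⁻¹) := by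
      field_simp
      ring
    simp only [extendedGammaKernel, h_exponent]
  rw [extendedGamma, h_inv, mellin_comp_inv fun u => extendedGammaKernel w (w * u),
    mellin_comp_mul_left _ _ hw, neg_neg, smul_eq_mul, extendedGamma]

lemma hasDerivAt_extendedGammaKernel (w : ℝ) {u : ℝ} (hu : u ≠ 0) :
    HasDerivAt (extendedGammaKernel w)
      (w * ((u : ℂ) ^ (-2 : ℂ) • extendedGammaKernel w u) - extendedGammaKernel w u) u := by
  have h_exponent : HasDerivAt (fun u : ℝ => -u - w / u) (-1 + w / u ^ 2) u := by
    refine ((hasDerivAt_id u).neg.sub ((hasDerivAt_inv hu).const_mul w)).congr_deriv ?_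
    ring
  refine h_exponent.exp.ofReal_comp.congr_deriv ?_
  rw [Complex.cpow_neg, Complex.cpow_ofNat, extendedGammaKernel, smul_eq_mul]
  push_cast
  ring

lemma extendedGamma_add_one {w : ℝ} (hw : 0 < w) (ν : ℂ) :
    extendedGamma (ν + 1) w = ν * extendedGamma ν w + w * extendedGamma (ν - 1) w := by
  have h_shift : MellinConvergent (fun u : ℝ => (u : ℂ) ^ (-2 : ℂ) • extendedGammaKernel w u)
      (ν + 1) :=
    MellinConvergent.cpow_smul.2 (mellinConvergent_extendedGammaKernel hw _)
  have h_mellin := hasMellin_sub (h_shift.const_smul (w : ℂ))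
    (mellinConvergent_extendedGammaKernel hw (ν + 1))
  have h_parts := mellin_of_hasDerivAt
    (fun u hu => hasDerivAt_extendedGammaKernel w (ne_of_gt hu))
    (mellinConvergent_extendedGammaKernel hw (ν + 1 - 1)) h_mellin.1
  have h_deriv := h_mellin.2
  rw [mellin_const_smul, mellin_cpow_smul, show ν + 1 + -2 = ν - 1 by ring] at h_deriv
  rw [add_sub_cancel_right] at h_parts
  simp only [smul_eq_mul] at h_parts h_deriv
  simp only [extendedGamma]
  linear_combination h_deriv - h_parts

lemma hasDerivAt_extendedGamma {w : ℝ} (hw : 0 < w) (ν : ℂ) :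
    HasDerivAt (extendedGamma ν) (-extendedGamma (ν - 1) w) w := by
  have h_bound : ∀ u ∈ Ioi (0 : ℝ), ∀ v ∈ Ioi (w / 2),
      ‖-((u : ℂ) ^ (ν - 1 - 1) • extendedGammaKernel v u)‖ ≤
        ‖(u : ℂ) ^ (ν - 1 - 1) • extendedGammaKernel (w / 2) u‖ := by
    intro u (hu : 0 < u) v (hv : w / 2 < v)
    rw [norm_neg, norm_smul, norm_smul, norm_extendedGammaKernel, norm_extendedGammaKernel]
    gcongr
  have h_deriv : ∀ u ∈ Ioi (0 : ℝ), ∀ v ∈ Ioi (w / 2),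
      HasDerivAt (fun v => (u : ℂ) ^ (ν - 1) • extendedGammaKernel v u)
        (-((u : ℂ) ^ (ν - 1 - 1) • extendedGammaKernel v u)) v := by
    intro u hu v _
    have hu' : (u : ℂ) ≠ 0 := Complex.ofReal_ne_zero.2 (ne_of_gt hu)
    have h_kernel := (((hasDerivAt_id v).div_const u).const_sub (-u)).exp.ofReal_comp
    refine (h_kernel.const_mul ((u : ℂ) ^ (ν - 1))).congr_deriv ?_
    rw [Complex.cpow_sub (ν - 1) 1 hu', Complex.cpow_one]
    simp only [extendedGammaKernel, smul_eq_mul, id]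
    push_cast
    ring
  have h := (hasDerivAt_integral_of_dominated_loc_of_deriv_le (𝕜 := ℝ)
    (Ioi_mem_nhds (half_lt_self hw))
    (Eventually.of_forall fun v => aestronglyMeasurable_cpow_smul_extendedGammaKernel v _)
    (mellinConvergent_extendedGammaKernel hw ν)
    (aestronglyMeasurable_cpow_smul_extendedGammaKernel w _).neg
    (ae_restrict_of_forall_mem measurableSet_Ioi h_bound)
    (mellinConvergent_extendedGammaKernel (half_pos hw) (ν - 1)).norm
    (ae_restrict_of_forall_mem measurableSet_Ioi h_deriv)).2
  rwa [integral_neg] at h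

lemma extendedGamma_zero {ν : ℂ} (hν : 0 < ν.re) : extendedGamma ν 0 = Complex.Gamma ν := by
  rw [Complex.Gamma_eq_integral hν, Complex.GammaIntegral, extendedGamma, mellin]
  simp only [extendedGammaKernel, zero_div, sub_zero, smul_eq_mul, mul_comm]

lemma tendsto_extendedGamma_nhdsGT_zero {ν : ℂ} (hν : 0 < ν.re) :
    Tendsto (extendedGamma ν) (𝓝[>] 0) (𝓝 (Complex.Gamma ν)) := by
  rw [← extendedGamma_zero hν]
  refine tendsto_integral_filter_of_dominated_convergence
    (fun u : ℝ => ‖((Real.exp (-u) : ℝ) : ℂ) * (u : ℂ) ^ (ν - 1)‖)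
    (Eventually.of_forall fun v => aestronglyMeasurable_cpow_smul_extendedGammaKernel v _) ?_
    (Complex.GammaIntegral_convergent hν).norm (Eventually.of_forall fun u => ?_)
  · filter_upwards [self_mem_nhdsWithin] with v (hv : 0 < v)
    refine ae_restrict_of_forall_mem measurableSet_Ioi fun u (hu : 0 < u) => ?_
    rw [norm_smul, norm_mul, mul_comm, norm_extendedGammaKernel,
      Complex.norm_of_nonneg (Real.exp_pos _).le]
    have h_nonneg : 0 ≤ v / u := by positivity
    gcongr
    linarith
  · have h_cont : Continuous fun v : ℝ => (u : ℂ) ^ (ν - 1) • extendedGammaKernel v u := by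
      unfold extendedGammaKernel
      fun_prop
    exact (h_cont.tendsto 0).mono_left nhdsWithin_le_nhds

/-! ### Wronskian and connection formula -/

/-- The Wronskian `C_ν(w) Γ_w(ν+1) + w C_{ν+1}(w) Γ_w(ν)`, that is
`z (I_ν(z) K_{ν+1}(z) + I_{ν+1}(z) K_ν(z))` with `w = (z/2)²`. -/
noncomputable def besselWronskian (ν : ℂ) (w : ℝ) : ℂ :=
  besselClifford ν w * extendedGamma (ν + 1) w + w * besselClifford (ν + 1) w * extendedGamma ν w

lemma hasDerivAt_besselWronskian {w : ℝ} (hw : 0 < w) (ν : ℂ) :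
    HasDerivAt (besselWronskian ν) 0 w := by
  have h_id : HasDerivAt (fun v : ℝ => (v : ℂ)) 1 w := (hasDerivAt_id w).ofReal_comp
  refine (((hasDerivAt_besselClifford ν w).comp_ofReal.mul
    (hasDerivAt_extendedGamma hw (ν + 1))).add
      ((h_id.mul (hasDerivAt_besselClifford (ν + 1) w).comp_ofReal).mul
        (hasDerivAt_extendedGamma hw ν))).congr_deriv ?_
  have h_clifford := besselClifford_eq_add ν w
  have h_gamma := extendedGamma_add_one hw ν
  rw [add_sub_cancel_right, show ν + 1 + 1 = ν + 2 by ring]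
  simp only [Pi.mul_apply]
  linear_combination -extendedGamma ν w * h_clifford + besselClifford (ν + 1) w * h_gamma

lemma besselWronskian_add_one {w : ℝ} (hw : 0 < w) (ν : ℂ) :
    besselWronskian (ν + 1) w = besselWronskian ν w := by
  have h_clifford := besselClifford_eq_add ν w
  have h_gamma := extendedGamma_add_one hw (ν + 1)
  rw [add_sub_cancel_right] at h_gamma
  simp only [besselWronskian]
  rw [show ν + 2 = ν + 1 + 1 by ring] at h_clifford
  linear_combination -extendedGamma (ν + 1) w * h_clifford + besselClifford (ν + 1) w * h_gamma

lemma tendsto_besselWronskian_nhdsGT_zero {ν : ℂ} (hν : 0 < ν.re) :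
    Tendsto (besselWronskian ν) (𝓝[>] 0) (𝓝 1) := by
  have hν' : 0 < (ν + 1).re := by simpa using hν.trans (lt_add_one _)
  have h_clifford (μ : ℂ) : Tendsto (fun w : ℝ => besselClifford μ w) (𝓝[>] 0)
      (𝓝 (besselClifford μ (0 : ℝ))) :=
    (hasDerivAt_besselClifford μ _).comp_ofReal.continuousAt.tendsto.mono_left nhdsWithin_le_nhds
  have h_id : Tendsto (fun w : ℝ => (w : ℂ)) (𝓝[>] 0) (𝓝 (0 : ℝ)) :=
    (Complex.continuous_ofReal.tendsto 0).mono_left nhdsWithin_le_nhds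
  have h := ((h_clifford ν).mul (tendsto_extendedGamma_nhdsGT_zero hν')).add
    ((h_id.mul (h_clifford (ν + 1))).mul (tendsto_extendedGamma_nhdsGT_zero hν))
  rwa [Complex.ofReal_zero, besselClifford_zero,
    inv_mul_cancel₀ (Complex.Gamma_ne_zero_of_re_pos hν'), zero_mul, zero_mul, add_zero] at h

lemma besselWronskian_eq_one {w : ℝ} (hw : 0 < w) (ν : ℂ) : besselWronskian ν w = 1 := by
  have h_of_re_pos {μ : ℂ} (hμ : 0 < μ.re) : besselWronskian μ w = 1 := by
    refine tendsto_nhds_unique ((tendsto_congr' ?_).1 tendsto_const_nhds)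
      (tendsto_besselWronskian_nhdsGT_zero hμ)
    filter_upwards [self_mem_nhdsWithin] with v hv
    exact isOpen_Ioi.is_const_of_deriv_eq_zero isPreconnected_Ioi
      (fun u hu => (hasDerivAt_besselWronskian hu μ).differentiableAt.differentiableWithinAt)
      (fun u hu => (hasDerivAt_besselWronskian hu μ).deriv) hw hv
  have h_shift (n : ℕ) : besselWronskian (ν + n) w = besselWronskian ν w := by
    induction n with
    | zero => simp
    | succ n ih => rw [← ih, Nat.cast_succ, ← add_assoc, besselWronskian_add_one hw]
  obtain ⟨n, hn⟩ := exists_nat_gt (-ν.re)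
  rw [← h_shift n]
  exact h_of_re_pos (by simpa using neg_lt_iff_pos_add'.1 hn)

-- Eliminate `Γ_w(ν + 1)` between the Wronskian relations for `ν` and `-ν`.
lemma sin_div_pi_mul_extendedGamma {w : ℝ} (hw : 0 < w) (ν : ℂ) :
    Complex.sin (π * ν) / π * extendedGamma ν w =
      besselClifford (-ν) w - (w : ℂ) ^ ν * besselClifford ν w := by
  have hw' : (w : ℂ) ≠ 0 := Complex.ofReal_ne_zero.2 hw.ne'
  have h_wronskian := besselWronskian_eq_one hw ν
  have h_wronskian_neg := besselWronskian_eq_one hw (-ν)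
  have h_symm := extendedGamma_eq_cpow_mul_extendedGamma_neg hw ν
  have h_symm' : w * extendedGamma (ν - 1) w = (w : ℂ) ^ ν * extendedGamma (-ν + 1) w := by
    rw [extendedGamma_eq_cpow_mul_extendedGamma_neg hw (ν - 1), Complex.cpow_sub _ _ hw',
      Complex.cpow_one, neg_sub', sub_neg_eq_add]
    field_simp
  have h_clifford := besselClifford_eq_add (-ν - 1) w
  rw [show -ν - 1 + 1 = -ν by ring, show -ν - 1 + 2 = -ν + 1 by ring] at h_clifford
  rw [besselWronskian] at h_wronskian h_wronskian_neg
  have h_mixed : besselClifford (-ν) w * extendedGamma (ν + 1) w +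
      besselClifford (-ν - 1) w * extendedGamma ν w = (w : ℂ) ^ ν := by
    rw [extendedGamma_add_one hw, h_symm', h_clifford]
    linear_combination
      (w : ℂ) ^ ν * h_wronskian_neg + (w * besselClifford (-ν + 1) w) * h_symm
  rw [← besselClifford_mul_besselClifford_neg_sub ν w]
  linear_combination besselClifford (-ν) w * h_wronskian - besselClifford ν w * h_mixed

/-! ### The integral representation of `K_ν` -/

lemma besselI_eq_cpow_mul_besselClifford (ν : ℂ) {z : ℂ} (hz : z ≠ 0) :
    besselI ν z = (z / 2) ^ ν * besselClifford ν ((z / 2) ^ 2) := by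
  rw [besselI, besselClifford, ← tsum_mul_left]
  refine tsum_congr fun n => ?_
  rw [besselCliffordCoeff, Complex.cpow_add _ _ (div_ne_zero hz two_ne_zero), ← Nat.cast_ofNat,
    ← Nat.cast_mul, Complex.cpow_natCast, pow_mul, div_eq_mul_inv, mul_inv]
  ring

lemma besselI_neg_sub_besselI (ν : ℂ) {z : ℝ} (hz : 0 < z) :
    besselI (-ν) z - besselI ν z = Complex.sin (π * ν) / π * (((z : ℂ) / 2) ^ (-ν) *
      extendedGamma ν ((z / 2) ^ 2)) := by
  have hz' : (z : ℂ) ≠ 0 := Complex.ofReal_ne_zero.2 hz.ne'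
  have h_half : ((z : ℂ) / 2) ^ ν ≠ 0 := by simp [Complex.cpow_eq_zero_iff, hz']
  have h_sq : (((z / 2) ^ 2 : ℝ) : ℂ) ^ ν = ((z : ℂ) / 2) ^ ν * ((z : ℂ) / 2) ^ ν := by
    rw [pow_two, Complex.ofReal_mul, Complex.mul_cpow_ofReal_nonneg (by positivity) (by positivity),
      Complex.ofReal_div, Complex.ofReal_ofNat]
  have h := sin_div_pi_mul_extendedGamma (by positivity : 0 < (z / 2) ^ 2) ν
  rw [mul_left_comm, h, h_sq, besselI_eq_cpow_mul_besselClifford _ hz',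
    besselI_eq_cpow_mul_besselClifford _ hz', Complex.cpow_neg]
  push_cast
  field_simp

lemma pi_div_sin_mul_besselI_neg_sub {μ : ℂ} (hμ : Complex.sin (μ * π) ≠ 0) {z : ℝ} (hz : 0 < z) :
    π / (2 * Complex.sin (μ * π)) * (besselI (-μ) z - besselI μ z) =
      1 / 2 * ((z : ℂ) / 2) ^ (-μ) * extendedGamma μ ((z / 2) ^ 2) := by
  have hπ : (π : ℂ) ≠ 0 := Complex.ofReal_ne_zero.2 Real.pi_ne_zero
  rw [mul_comm] at hμ
  rw [besselI_neg_sub_besselI _ hz, mul_comm μ]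
  field_simp

lemma eventually_sin_mul_pi_ne_zero (n : ℤ) :
    ∀ᶠ μ in 𝓝[≠] (n : ℂ), Complex.sin (μ * π) ≠ 0 := by
  have h_sin : Complex.sin (n * π) = 0 := Complex.sin_int_mul_pi n
  have h_cos : Complex.cos (n * π) ≠ 0 := fun h => by
    simpa [h_sin, h] using Complex.sin_sq_add_cos_sq (n * π)
  refine HasDerivAt.eventually_ne ((hasDerivAt_id (n : ℂ)).mul_const (π : ℂ)).csin ?_
  simpa using h_cos

lemma besselK_eq_extendedGamma (ν : ℂ) {z : ℝ} (hz : 0 < z) :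
    besselK ν z = 1 / 2 * ((z : ℂ) / 2) ^ (-ν) * extendedGamma ν ((z / 2) ^ 2) := by
  have hz' : (z : ℂ) ≠ 0 := Complex.ofReal_ne_zero.2 hz.ne'
  rw [besselK]
  split_ifs with hν
  · obtain ⟨n, rfl⟩ := hν
    refine Tendsto.limUnder_eq ?_
    have h_cont : Continuous fun μ : ℂ =>
        1 / 2 * ((z : ℂ) / 2) ^ (-μ) * extendedGamma μ ((z / 2) ^ 2) :=
      (continuous_const.mul
        (continuous_neg.const_cpow (Or.inl (div_ne_zero hz' two_ne_zero)))).mul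
        (differentiable_extendedGamma (by positivity)).continuous
    refine ((h_cont.tendsto (n : ℂ)).mono_left nhdsWithin_le_nhds).congr' ?_
    filter_upwards [eventually_sin_mul_pi_ne_zero n] with μ hμ
    exact (pi_div_sin_mul_besselI_neg_sub hμ hz).symm
  · refine pi_div_sin_mul_besselI_neg_sub (Complex.sin_ne_zero_iff.2 fun k hk => hν ⟨k, ?_⟩) hz
    exact mul_right_cancel₀ (Complex.ofReal_ne_zero.2 Real.pi_ne_zero) hk

/-! ### Truncated Fourier integrals of Gaussians -/

lemma norm_cexp_I_mul_mul (θ t : ℝ) : ‖Complex.exp (Complex.I * θ * t)‖ = 1 := by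
  rw [mul_assoc, ← Complex.ofReal_mul, Complex.norm_exp_I_mul_ofReal]

lemma norm_integral_cexp_I_mul_mul_le {θ : ℝ} (hθ : θ ≠ 0) {g g' : ℝ → ℂ} {a b : ℝ} (hab : a ≤ b)
    (hg : ∀ t ∈ uIcc a b, HasDerivAt g (g' t) t) (hg' : IntervalIntegrable g' volume a b) :
    ‖∫ t in a..b, Complex.exp (Complex.I * θ * t) * g t‖ ≤
      (‖g a‖ + ‖g b‖ + ∫ t in a..b, ‖g' t‖) / |θ| := by
  set c : ℂ := Complex.I * θ with hc
  have hc_ne : c ≠ 0 := mul_ne_zero Complex.I_ne_zero (Complex.ofReal_ne_zero.2 hθ)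
  have hc_norm : ‖c‖ = |θ| := by simp [hc]
  have h_phase : ∀ t ∈ uIcc a b,
      HasDerivAt (fun t : ℝ => Complex.exp (c * t) / c) (Complex.exp (c * t)) t := by
    intro t _
    refine (((hasDerivAt_id (t : ℂ)).const_mul c).cexp.div_const c).comp_ofReal.congr_deriv ?_
    rw [mul_one, mul_div_cancel_right₀ _ hc_ne, id]
  have h_norm (f : ℝ → ℂ) (t : ℝ) : ‖f t * (Complex.exp (c * t) / c)‖ = ‖f t‖ / |θ| := by
    rw [norm_mul, norm_div, norm_cexp_I_mul_mul, hc_norm, mul_one_div]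
  simp_rw [mul_comm (Complex.exp _)]
  rw [intervalIntegral.integral_mul_deriv_eq_deriv_mul hg h_phase hg'
    (Continuous.intervalIntegrable (by fun_prop) _ _)]
  calc _ ≤ ‖g b‖ / |θ| + ‖g a‖ / |θ| + ∫ t in a..b, ‖g' t‖ / |θ| := by
        refine (norm_sub_le _ _).trans (add_le_add ((norm_sub_le _ _).trans_eq ?_) ?_)
        · rw [h_norm, h_norm]
        · refine (intervalIntegral.norm_integral_le_integral_norm hab).trans_eq ?_
          simp only [h_norm]
    _ = _ := by
        rw [intervalIntegral.integral_div]
        ring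

lemma integral_norm_deriv_gaussian {u : ℝ} (hu : 0 < u) :
    ∫ t : ℝ, ‖Complex.exp (-u * t ^ 2) * (-2 * u * t)‖ = 2 := by
  have h_norm (t : ℝ) : ‖Complex.exp (-u * t ^ 2) * (-2 * u * t)‖ =
      2 * u * (|t| * Real.exp (-u * |t| ^ 2)) := by
    rw [norm_mul, norm_cexp_neg_mul_sq, sq_abs]
    simp only [Complex.ofReal_re, neg_mul, norm_neg, Complex.norm_mul, Complex.norm_ofNat,
      Complex.norm_real, Real.norm_eq_abs, abs_of_pos hu]
    ring
  have h_half : ∫ t in Ioi (0 : ℝ), t * Real.exp (-u * t ^ 2) = (2 * u)⁻¹ := by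
    exact_mod_cast integral_mul_cexp_neg_mul_sq (b := u) (by simpa using hu)
  simp only [h_norm]
  rw [integral_const_mul, integral_comp_abs (f := fun t => t * Real.exp (-u * t ^ 2)), h_half]
  field_simp

/-- The Fourier integral of the Gaussian `e^{-ut²}` at frequency `θ`, truncated to `[-N, N]`. -/
noncomputable def truncatedFourierGaussian (θ N u : ℝ) : ℂ :=
  ∫ t in (-N)..N, Complex.exp (Complex.I * θ * t) * Complex.exp (-u * t ^ 2)

-- The total variation of the Gaussian does not depend on `u`.
lemma norm_truncatedFourierGaussian_le {θ : ℝ} (hθ : θ ≠ 0) {u N : ℝ} (hu : 0 < u) (hN : 0 ≤ N) :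
    ‖truncatedFourierGaussian θ N u‖ ≤ 4 / |θ| := by
  have h_deriv : ∀ t : ℝ, HasDerivAt (fun t : ℝ => Complex.exp (-u * t ^ 2))
      (Complex.exp (-u * t ^ 2) * (-2 * u * t)) t := by
    intro t
    refine ((hasDerivAt_pow 2 (t : ℂ)).const_mul (-u : ℂ)).cexp.comp_ofReal.congr_deriv ?_
    ring
  have h_le_one (t : ℝ) : ‖Complex.exp (-u * t ^ 2)‖ ≤ 1 := by
    rw [norm_cexp_neg_mul_sq, Real.exp_le_one_iff, Complex.ofReal_re]
    nlinarith [sq_nonneg t]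
  have h_variation : ∫ t in (-N)..N, ‖Complex.exp (-u * t ^ 2) * (-2 * u * t)‖ ≤ 2 := by
    rw [← integral_norm_deriv_gaussian hu, intervalIntegral.integral_of_le (by linarith)]
    refine setIntegral_le_integral (Integrable.of_integral_ne_zero ?_)
      (Eventually.of_forall fun t => norm_nonneg _)
    rw [integral_norm_deriv_gaussian hu]
    exact two_ne_zero
  refine (norm_integral_cexp_I_mul_mul_le hθ (by linarith) (fun t _ => h_deriv t)
    (Continuous.intervalIntegrable (by fun_prop) _ _)).trans ?_
  gcongr
  linarith [h_le_one (-N), h_le_one N]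

lemma tendsto_truncatedFourierGaussian (θ : ℝ) {u : ℝ} (hu : 0 < u) :
    Tendsto (fun N => truncatedFourierGaussian θ N u) atTop
      (𝓝 ((π / u) ^ (1 / 2 : ℂ) * Complex.exp (-θ ^ 2 / (4 * u)))) := by
  have hu' : 0 < (u : ℂ).re := by simpa using hu
  rw [← fourierIntegral_gaussian hu' θ]
  refine intervalIntegral_tendsto_integral ?_ tendsto_neg_atTop_atBot tendsto_id
  exact (integrable_cexp_neg_mul_sq hu').bdd_mul (c := 1) (by fun_prop)
    (Eventually.of_forall fun t => (norm_cexp_I_mul_mul θ t).le)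

lemma integral_cexp_mul_integral_gaussian {k : ℝ → ℂ} (hk : IntegrableOn k (Ioi 0)) (θ N : ℝ) :
    ∫ t in (-N)..N, Complex.exp (Complex.I * θ * t) *
        ∫ u in Ioi (0 : ℝ), k u * Complex.exp (-u * t ^ 2) =
      ∫ u in Ioi (0 : ℝ), k u * truncatedFourierGaussian θ N u := by
  have h_bound : ∀ᵐ p : ℝ × ℝ ∂(volume.restrict (uIoc (-N) N)).prod (volume.restrict (Ioi 0)),
      ‖Complex.exp (Complex.I * θ * p.1) * Complex.exp (-p.2 * p.1 ^ 2)‖ ≤ 1 := by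
    rw [Measure.prod_restrict]
    refine ae_restrict_of_forall_mem (measurableSet_uIoc.prod measurableSet_Ioi) fun p hp => ?_
    rw [norm_mul, norm_cexp_I_mul_mul, one_mul, norm_cexp_neg_mul_sq, Real.exp_le_one_iff,
      Complex.ofReal_re]
    exact mul_nonpos_of_nonpos_of_nonneg (neg_nonpos.2 (le_of_lt hp.2)) (sq_nonneg _)
  have : IsFiniteMeasure (volume.restrict (uIoc (-N) N)) := by
    rw [uIoc]
    infer_instance
  have h_integrable := (hk.comp_snd (volume.restrict (uIoc (-N) N))).bdd_mul
    (by fun_prop) h_bound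
  calc _ = ∫ t in (-N)..N, ∫ u in Ioi (0 : ℝ),
        Complex.exp (Complex.I * θ * t) * Complex.exp (-u * t ^ 2) * k u := by
        simp only [mul_assoc, mul_comm (k _), integral_const_mul]
    _ = ∫ u in Ioi (0 : ℝ), ∫ t in (-N)..N,
        Complex.exp (Complex.I * θ * t) * Complex.exp (-u * t ^ 2) * k u :=
        intervalIntegral_integral_swap h_integrable
    _ = _ := by
        simp only [intervalIntegral.integral_mul_const, mul_comm (k _), truncatedFourierGaussian]

lemma tendsto_integral_cexp_mul_integral_gaussian {k : ℝ → ℂ} (hk : IntegrableOn k (Ioi 0))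
    {θ : ℝ} (hθ : θ ≠ 0) :
    Tendsto (fun N : ℝ => ∫ t in (-N)..N, Complex.exp (Complex.I * θ * t) *
        ∫ u in Ioi (0 : ℝ), k u * Complex.exp (-u * t ^ 2)) atTop
      (𝓝 (∫ u in Ioi (0 : ℝ),
        k u * ((π / u) ^ (1 / 2 : ℂ) * Complex.exp (-θ ^ 2 / (4 * u))))) := by
  simp only [integral_cexp_mul_integral_gaussian hk]
  refine tendsto_integral_filter_of_dominated_convergence (fun u => ‖k u‖ * (4 / |θ|))
    (Eventually.of_forall fun N => hk.aestronglyMeasurable.mul ?_) ?_ (hk.norm.mul_const _)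
    (ae_restrict_of_forall_mem measurableSet_Ioi fun u hu =>
      (tendsto_truncatedFourierGaussian θ hu).const_mul _)
  · unfold truncatedFourierGaussian
    exact (intervalIntegral.continuous_parametric_intervalIntegral_of_continuous' (by fun_prop)
      _ _).aestronglyMeasurable
  · filter_upwards [eventually_ge_atTop 0] with N hN
    refine ae_restrict_of_forall_mem measurableSet_Ioi fun u hu => ?_
    rw [norm_mul]
    gcongr
    exact norm_truncatedFourierGaussian_le hθ hu hN

/-! ### Basset's integral -/

lemma integrableOn_cpow_mul_exp_neg_mul_Ioi {a : ℂ} (ha : 0 < a.re) {X : ℝ} (hX : 0 < X) :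
    IntegrableOn (fun u : ℝ => (u : ℂ) ^ (a - 1) * Complex.exp (-(X * u))) (Ioi 0) := by
  refine Integrable.of_integral_ne_zero ?_
  rw [Complex.integral_cpow_mul_exp_neg_mul_Ioi ha hX]
  refine mul_ne_zero ?_ (Complex.Gamma_ne_zero_of_re_pos ha)
  simp [Complex.cpow_eq_zero_iff, hX.ne']

lemma ofReal_add_sq_cpow_neg {a : ℂ} (ha : 0 < a.re) {X : ℝ} (hX : 0 < X) (t : ℝ) :
    ((X + t ^ 2 : ℝ) : ℂ) ^ (-a) = (Complex.Gamma a)⁻¹ * ∫ u in Ioi (0 : ℝ),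
      (u : ℂ) ^ (a - 1) * Complex.exp (-(X * u)) * Complex.exp (-u * t ^ 2) := by
  have hXt : 0 < X + t ^ 2 := by positivity
  have h_exp (u : ℝ) : Complex.exp (-(X * u)) * Complex.exp (-u * t ^ 2) =
      Complex.exp (-((X + t ^ 2 : ℝ) * u)) := by
    rw [← Complex.exp_add]
    push_cast
    ring_nf
  simp only [mul_assoc, h_exp]
  rw [Complex.integral_cpow_mul_exp_neg_mul_Ioi ha hXt, mul_comm,
    mul_inv_cancel_right₀ (Complex.Gamma_ne_zero_of_re_pos ha), one_div,
    Complex.inv_cpow_ofReal_nonneg hXt.le, Complex.cpow_neg]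

lemma integral_cpow_mul_exp_neg_mul_sub_div {X : ℝ} (hX : 0 < X) (ν : ℂ) (b : ℝ) :
    ∫ u in Ioi (0 : ℝ), (u : ℂ) ^ (ν - 1) * Complex.exp (-(X * u) - b / u) =
      (X : ℂ) ^ (-ν) * extendedGamma ν (X * b) := by
  rw [extendedGamma, ← smul_eq_mul, ← mellin_comp_mul_left _ _ hX, mellin]
  refine setIntegral_congr_fun measurableSet_Ioi fun u _ => ?_
  simp only [extendedGammaKernel, mul_div_mul_left _ _ hX.ne', smul_eq_mul]
  push_cast
  rfl

lemma integral_cpow_mul_fourier_gaussian {X : ℝ} (hX : 0 < X) (a : ℂ) (θ : ℝ) :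
    ∫ u in Ioi (0 : ℝ), (u : ℂ) ^ (a - 1) * Complex.exp (-(X * u)) *
        ((π / u) ^ (1 / 2 : ℂ) * Complex.exp (-θ ^ 2 / (4 * u))) =
      (π : ℂ) ^ (1 / 2 : ℂ) * ((X : ℂ) ^ (-(a - 1 / 2)) *
        extendedGamma (a - 1 / 2) (X * (θ / 2) ^ 2)) := by
  rw [← integral_cpow_mul_exp_neg_mul_sub_div hX, ← integral_const_mul]
  refine setIntegral_congr_fun measurableSet_Ioi fun u (hu : 0 < u) => ?_
  have hu' : (u : ℂ) ≠ 0 := Complex.ofReal_ne_zero.2 hu.ne'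
  have h_exponent : -(X * u : ℂ) - ((θ / 2) ^ 2 : ℝ) / u = -(X * u) + -θ ^ 2 / (4 * u) := by
    push_cast
    field_simp
    ring
  have h_cpow : (u : ℂ) ^ (a - 1 / 2 - 1) = (u : ℂ) ^ (a - 1) / (u : ℂ) ^ (1 / 2 : ℂ) := by
    rw [← Complex.cpow_sub _ _ hu']
    ring_nf
  rw [h_exponent, Complex.exp_add, h_cpow, Complex.div_cpow_ofReal_nonneg Real.pi_pos.le hu.le]
  ring

lemma tendsto_basset_integral {a : ℂ} (ha : 0 < a.re) {r θ : ℝ} (hr : 0 < r) (hθ : θ ≠ 0) :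
    Tendsto (fun N : ℝ => ∫ t in (-N)..N,
        Complex.exp (Complex.I * θ * t) * ((r ^ 2 + t ^ 2 : ℝ) : ℂ) ^ (-a))
      atTop
      (𝓝 (2 * (π : ℂ) ^ (1 / 2 : ℂ) / Complex.Gamma a * ((|θ| / (2 * r) : ℝ) : ℂ) ^ (a - 1 / 2) *
        besselK (a - 1 / 2) (r * |θ| : ℝ))) := by
  have h_lim := (tendsto_integral_cexp_mul_integral_gaussian
    (integrableOn_cpow_mul_exp_neg_mul_Ioi ha (pow_pos hr 2)) hθ).const_mul (Complex.Gamma a)⁻¹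
  rw [integral_cpow_mul_fourier_gaussian (pow_pos hr 2)] at h_lim
  simp only [← intervalIntegral.integral_const_mul, mul_left_comm (Complex.Gamma a)⁻¹,
    ← ofReal_add_sq_cpow_neg ha (pow_pos hr 2)] at h_lim
  convert! h_lim using 2
  set ν := a - 1 / 2
  have h_arg : (r * |θ| / 2) ^ 2 = r ^ 2 * (θ / 2) ^ 2 := by
    rw [div_pow, div_pow, mul_pow, sq_abs]
    ring
  have h_prefactor : ((|θ| / (2 * r) : ℝ) : ℂ) ^ ν * ((r * |θ| / 2 : ℝ) : ℂ) ^ (-ν) =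
      ((r ^ 2 : ℝ) : ℂ) ^ (-ν) := by
    have h_mul : r * |θ| / 2 = |θ| / (2 * r) * r ^ 2 := by field_simp
    have h_ne : ((|θ| / (2 * r) : ℝ) : ℂ) ^ ν ≠ 0 := by
      rw [Complex.cpow_ne_zero_iff]
      exact Or.inl (Complex.ofReal_ne_zero.2 (by positivity))
    rw [h_mul, Complex.ofReal_mul, Complex.mul_cpow_ofReal_nonneg (by positivity) (by positivity),
      Complex.cpow_neg _ ν, mul_inv_cancel_left₀ h_ne]
  rw [besselK_eq_extendedGamma _ (by positivity), h_arg, ← h_prefactor]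
  push_cast
  ring

lemma pi_cpow_half_mul_cpow (s : ℂ) {x : ℝ} (hx : x ≠ 0) (ξ : ℝ) :
    (π : ℂ) ^ (1 / 2 : ℂ) * ((π * |ξ| / x ^ 2 : ℝ) : ℂ) ^ ((s - 2) / 4) =
      (π : ℂ) ^ (s / 4) * ((|x| : ℝ) : ℂ) ^ (1 - s / 2) * ((|ξ| : ℝ) : ℂ) ^ ((s - 2) / 4) := by
  have hπ : (π : ℂ) ^ (s / 4) = (π : ℂ) ^ (1 / 2 : ℂ) * (π : ℂ) ^ ((s - 2) / 4) := by
    rw [← Complex.cpow_add _ _ (Complex.ofReal_ne_zero.2 Real.pi_ne_zero)]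
    ring_nf
  have hx_cpow : (((x ^ 2)⁻¹ : ℝ) : ℂ) ^ ((s - 2) / 4) = ((|x| : ℝ) : ℂ) ^ (1 - s / 2) := by
    have hx' : ((|x| : ℝ) : ℂ) ≠ 0 := Complex.ofReal_ne_zero.2 (abs_ne_zero.2 hx)
    rw [← sq_abs, Complex.ofReal_inv, Complex.inv_cpow_ofReal_nonneg (sq_nonneg _),
      ← Complex.cpow_neg, sq, Complex.ofReal_mul,
      Complex.mul_cpow_ofReal_nonneg (abs_nonneg x) (abs_nonneg x), ← Complex.cpow_add _ _ hx']
    ring_nf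
  rw [div_eq_mul_inv (π * |ξ|), Complex.ofReal_mul, Complex.mul_cpow_ofReal_nonneg (by positivity)
    (by positivity), Complex.ofReal_mul, Complex.mul_cpow_ofReal_nonneg Real.pi_pos.le
    (abs_nonneg ξ), hx_cpow, hπ]
  ring

theorem koranyi_t_integral_general {s : ℂ} (hs : 0 < s.re) {x ξ₂ : ℝ} (hx : x ≠ 0) (hξ : ξ₂ ≠ 0) :
    Tendsto (fun N : ℝ => ∫ t in (-N)..N,
        Complex.exp (-2 * π * Complex.I * t * ξ₂) * ((x ^ 4 + t ^ 2 : ℝ) : ℂ) ^ (-(s / 4)))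
      atTop
      (𝓝 (2 * (π : ℂ) ^ (s / 4) / Complex.Gamma (s / 4) * ((|x| : ℝ) : ℂ) ^ (1 - s / 2) *
        ((|ξ₂| : ℝ) : ℂ) ^ ((s - 2) / 4) *
          besselK ((s - 2) / 4) ((2 * π * x ^ 2 * |ξ₂| : ℝ) : ℂ))) := by
  have ha : 0 < (s / 4).re := by simpa using hs
  have hθ : -2 * π * ξ₂ ≠ 0 := mul_ne_zero (by simp [Real.pi_ne_zero]) hξ
  have h_abs : |-2 * π * ξ₂| = 2 * π * |ξ₂| := by simp [abs_mul, abs_of_pos Real.pi_pos]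
  have h_order : s / 4 - 1 / 2 = (s - 2) / 4 := by ring
  have h_ratio : 2 * π * |ξ₂| / (2 * x ^ 2) = π * |ξ₂| / x ^ 2 := by
    rw [mul_assoc, mul_div_mul_left _ _ two_ne_zero]
  have h_arg : x ^ 2 * (2 * π * |ξ₂|) = 2 * π * x ^ 2 * |ξ₂| := by ring
  have h_lim := tendsto_basset_integral ha (sq_pos_of_ne_zero hx) hθ
  rw [h_abs, h_order, h_ratio, h_arg] at h_lim
  convert! h_lim using 2
  · refine intervalIntegral.integral_congr fun t _ => ?_
    push_cast
    ring_nf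
  · linear_combination -(2 / Complex.Gamma (s / 4) *
      besselK ((s - 2) / 4) ((2 * π * x ^ 2 * |ξ₂| : ℝ) : ℂ)) * pi_cpow_half_mul_cpow s hx ξ₂

/-- **Formula (3.4).** For `s > 0` and nonzero reals `x`, `ξ₂`, the improper Riemann integral
`∫_{-∞}^∞ e^{-2πitξ₂} (x⁴+t²)^{-s/4} dt` converges (as the limit of `∫_{-N}^N` as `N → ∞`)
to `(2π^{s/4}/Γ(s/4)) |x|^{1-s/2} |ξ₂|^{(s-2)/4} K_{(s-2)/4}(2πx²|ξ₂|)`. -/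
theorem koranyi_t_integral (s x ξ₂ : ℝ) (hs : 0 < s) (hx : x ≠ 0) (hξ : ξ₂ ≠ 0) :
    Tendsto (fun N : ℝ => ∫ t in (-N)..N,
        Complex.exp (-2 * (Real.pi : ℂ) * Complex.I * (t : ℂ) * (ξ₂ : ℂ)) *
          (((x ^ 4 + t ^ 2) ^ (-(s / 4)) : ℝ) : ℂ))
      atTop
      (nhds (((2 * Real.pi ^ (s / 4) / Real.Gamma (s / 4) * |x| ^ (1 - s / 2) *
            |ξ₂| ^ ((s - 2) / 4) : ℝ) : ℂ) *
          besselK (((s - 2) / 4 : ℝ) : ℂ) ((2 * Real.pi * x ^ 2 * |ξ₂| : ℝ) : ℂ))) := by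
  have h_lim := koranyi_t_integral_general (s := s) (by simpa using hs) hx hξ
  have h_base (t : ℝ) : 0 ≤ x ^ 4 + t ^ 2 := by positivity
  convert! h_lim using 2
  · simp only [Complex.ofReal_cpow (h_base _)]
    push_cast
    rfl
  · push_cast [Complex.ofReal_cpow (abs_nonneg _), Complex.ofReal_cpow Real.pi_pos.le,
      ← Complex.Gamma_ofReal]
    rfl
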